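/- arXiv:2602.10693 — 3 statements merged into one kernel-verified Lean document; each statement's English description precedes it below -/
import Mathlib

section
/- Let Ω be a nonempty finite type, let μ and π be probability mass functions on Ω with μ(τ) > 0 and π(τ) > 0 for all τ, and let W(τ) = π(τ)/μ(τ). Fix α ∈ [0,1] and λ ≥ 0, and define the objective F(Q) = (1−α)·∑_τ Q(τ)·log(Q(τ)/μ(τ)) + α·∑_τ Q(τ)·log(Q(τ)/π(τ)) + λ·∑_τ Q(τ)·W(τ) for probability mass functions Q on Ω (with the convention 0·log 0 = 0). Define Z = ∑_τ μ(τ)^{1−α}·π(τ)^{α}·exp(−λ·W(τ)) and Q*(τ) = μ(τ)^{1−α}·π(τ)^{α}·exp(−λ·W(τ))/Z. Then Z > 0, Q* is a probability mass function on Ω, and for every probability mass function Q on Ω one has F(Q) ≥ F(Q*), with equality if and only if Q = Q*. -/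
/-!
Put `w = μ ^ (1 - α) * π ^ α * exp (-λ W)`. Collecting the logarithms gives `F Q = ∑ Q log (Q / w)`,
a single relative entropy with respect to an unnormalized weight. Replacing `w` by the probability
mass function `w / ∑ w = Q*` shifts it by the constant `log (∑ w)`, so that
`F Q = KL(Q ‖ Q*) - log (∑ w)`, and Gibbs' inequality identifies `Q*` as the unique minimizer.
-/

open Finset InformationTheory
open Real (exp log)

section RelEntropy

variable {Ω : Type*} [Fintype Ω] {p q w : Ω → ℝ}

/-- The relative entropy `∑ q log (q / p)` of a mass function `q` with respect to a weight `p`,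
neither of which has to be normalized. The convention `0 log 0 = 0` holds because `log 0 = 0`,
but a summand with `p τ = 0` is also `0`, rather than `∞`. -/
noncomputable def relEntropy (q p : Ω → ℝ) : ℝ :=
  ∑ τ, q τ * log (q τ / p τ)

theorem mul_klFun_div {a : ℝ} (b : ℝ) (ha : a ≠ 0) :
    a * klFun (b / a) = b * log (b / a) + a - b := by
  rw [klFun]
  field_simp

theorem relEntropy_eq_sum_mul_klFun_add (q : Ω → ℝ) (hp : ∀ τ, p τ ≠ 0) :
    relEntropy q p = ∑ τ, p τ * klFun (q τ / p τ) + (∑ τ, q τ - ∑ τ, p τ) := by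
  simp only [mul_klFun_div _ (hp _), sum_sub_distrib, sum_add_distrib, relEntropy]
  ring

theorem mul_klFun_div_nonneg {a b : ℝ} (ha : 0 ≤ a) (hb : 0 ≤ b) : 0 ≤ a * klFun (b / a) :=
  mul_nonneg ha (klFun_nonneg (div_nonneg hb ha))

theorem mul_klFun_div_eq_zero_iff {a b : ℝ} (ha : 0 < a) (hb : 0 ≤ b) :
    a * klFun (b / a) = 0 ↔ b = a := by
  rw [mul_eq_zero_iff_left ha.ne', klFun_eq_zero_iff (div_nonneg hb ha.le),
    div_eq_one_iff_eq ha.ne']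

theorem relEntropy_nonneg (hp : ∀ τ, 0 < p τ) (hq : ∀ τ, 0 ≤ q τ) (hpq : ∑ τ, p τ ≤ ∑ τ, q τ) :
    0 ≤ relEntropy q p := by
  rw [relEntropy_eq_sum_mul_klFun_add q fun τ => (hp τ).ne']
  exact add_nonneg (sum_nonneg fun τ _ => mul_klFun_div_nonneg (hp τ).le (hq τ))
    (sub_nonneg.2 hpq)

theorem relEntropy_self (p : Ω → ℝ) : relEntropy p p = 0 :=
  sum_eq_zero fun τ _ => by rcases eq_or_ne (p τ) 0 with h | h <;> simp [h]

theorem relEntropy_eq_zero_iff (hp : ∀ τ, 0 < p τ) (hq : ∀ τ, 0 ≤ q τ)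
    (hpq : ∑ τ, p τ ≤ ∑ τ, q τ) : relEntropy q p = 0 ↔ q = p := by
  refine ⟨fun h => ?_, fun h => h ▸ relEntropy_self q⟩
  have hterm : ∀ τ ∈ univ, 0 ≤ p τ * klFun (q τ / p τ) :=
    fun τ _ => mul_klFun_div_nonneg (hp τ).le (hq τ)
  have hsum : ∑ τ, p τ * klFun (q τ / p τ) = 0 := by
    rw [relEntropy_eq_sum_mul_klFun_add q fun τ => (hp τ).ne'] at h
    linarith [sum_nonneg hterm]
  funext τ
  exact (mul_klFun_div_eq_zero_iff (hp τ) (hq τ)).1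
    ((sum_eq_zero_iff_of_nonneg hterm).1 hsum τ (mem_univ τ))

theorem relEntropy_div_const (q : Ω → ℝ) (hw : ∀ τ, w τ ≠ 0) {c : ℝ} (hc : c ≠ 0) :
    relEntropy q (fun τ => w τ / c) = relEntropy q w + (∑ τ, q τ) * log c := by
  simp only [relEntropy, sum_mul, ← sum_add_distrib]
  refine sum_congr rfl fun τ _ => ?_
  rcases eq_or_ne (q τ) 0 with hq | hq
  · simp [hq]
  · rw [div_div_eq_mul_div, mul_div_right_comm, Real.log_mul (div_ne_zero hq (hw τ)) hc, mul_add]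

/-- The probability mass function proportional to the weight `w`; it is the zero function when the
total weight vanishes. -/
noncomputable def normalizedWeight (w : Ω → ℝ) (τ : Ω) : ℝ :=
  w τ / ∑ σ, w σ

theorem normalizedWeight_pos (hw : ∀ τ, 0 < w τ) (τ : Ω) : 0 < normalizedWeight w τ :=
  div_pos (hw τ) (sum_pos (fun σ _ => hw σ) ⟨τ, mem_univ τ⟩)

theorem sum_normalizedWeight (hw : ∑ τ, w τ ≠ 0) : ∑ τ, normalizedWeight w τ = 1 := by
  simp only [normalizedWeight, ← sum_div, div_self hw]

theorem relEntropy_normalizedWeight (hw : ∀ τ, w τ ≠ 0) (hsum : ∑ τ, w τ ≠ 0)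
    (hq : ∑ τ, q τ = 1) :
    relEntropy q (normalizedWeight w) = relEntropy q w + log (∑ τ, w τ) := by
  rw [← one_mul (log _), ← hq]
  exact relEntropy_div_const q hw hsum

theorem relEntropy_eq_relEntropy_normalizedWeight_add (hw : ∀ τ, w τ ≠ 0) (hsum : ∑ τ, w τ ≠ 0)
    (hq : ∑ τ, q τ = 1) :
    relEntropy q w =
      relEntropy q (normalizedWeight w) + relEntropy (normalizedWeight w) w := by
  have hmin : relEntropy (normalizedWeight w) w = -log (∑ τ, w τ) := by
    rw [eq_neg_iff_add_eq_zero,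
      ← relEntropy_normalizedWeight hw hsum (sum_normalizedWeight hsum), relEntropy_self]
  rw [relEntropy_normalizedWeight hw hsum hq, hmin, add_neg_cancel_right]

variable [Nonempty Ω]

theorem normalizedWeight_mem_stdSimplex (hw : ∀ τ, 0 < w τ) :
    normalizedWeight w ∈ stdSimplex ℝ Ω :=
  ⟨fun τ => (normalizedWeight_pos hw τ).le,
    sum_normalizedWeight (sum_pos (fun τ _ => hw τ) univ_nonempty).ne'⟩

theorem relEntropy_normalizedWeight_le (hw : ∀ τ, 0 < w τ) (hq : q ∈ stdSimplex ℝ Ω) :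
    relEntropy (normalizedWeight w) w ≤ relEntropy q w := by
  rw [relEntropy_eq_relEntropy_normalizedWeight_add (fun τ => (hw τ).ne')
    (sum_pos (fun τ _ => hw τ) univ_nonempty).ne' hq.2]
  exact le_add_of_nonneg_left <| relEntropy_nonneg (normalizedWeight_pos hw) hq.1
    ((normalizedWeight_mem_stdSimplex hw).2.trans hq.2.symm).le

theorem relEntropy_eq_relEntropy_normalizedWeight_iff (hw : ∀ τ, 0 < w τ)
    (hq : q ∈ stdSimplex ℝ Ω) :
    relEntropy q w = relEntropy (normalizedWeight w) w ↔ q = normalizedWeight w := by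
  rw [relEntropy_eq_relEntropy_normalizedWeight_add (fun τ => (hw τ).ne')
    (sum_pos (fun τ _ => hw τ) univ_nonempty).ne' hq.2, add_eq_right]
  exact relEntropy_eq_zero_iff (normalizedWeight_pos hw) hq.1
    ((normalizedWeight_mem_stdSimplex hw).2.trans hq.2.symm).le

end RelEntropy

section VespoWeight

variable {Ω : Type*} {μ π : Ω → ℝ} {τ : Ω}

/-- The unnormalized VESPO proposal: the geometric mixture of `μ` and `π` with exponents `1 - α` and
`α`, tilted by `exp (-lam * c)`. The cost `c` is arbitrary; it is the importance weight `π / μ` in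
the VESPO problem. -/
noncomputable def vespoWeight (μ π : Ω → ℝ) (α lam : ℝ) (c : Ω → ℝ) (τ : Ω) : ℝ :=
  μ τ ^ (1 - α) * π τ ^ α * exp (-lam * c τ)

theorem vespoWeight_pos (hμ : 0 < μ τ) (hπ : 0 < π τ) (α lam : ℝ) (c : Ω → ℝ) :
    0 < vespoWeight μ π α lam c τ :=
  mul_pos (mul_pos (Real.rpow_pos_of_pos hμ _) (Real.rpow_pos_of_pos hπ _)) (Real.exp_pos _)

theorem log_vespoWeight (hμ : 0 < μ τ) (hπ : 0 < π τ) (α lam : ℝ) (c : Ω → ℝ) :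
    log (vespoWeight μ π α lam c τ) = (1 - α) * log (μ τ) + α * log (π τ) - lam * c τ := by
  have hμ' : μ τ ^ (1 - α) ≠ 0 := (Real.rpow_pos_of_pos hμ _).ne'
  have hπ' : π τ ^ α ≠ 0 := (Real.rpow_pos_of_pos hπ _).ne'
  rw [vespoWeight, Real.log_mul (mul_ne_zero hμ' hπ') (Real.exp_ne_zero _), Real.log_mul hμ' hπ',
    Real.log_rpow hμ, Real.log_rpow hπ, Real.log_exp, neg_mul, ← sub_eq_add_neg]

theorem relEntropy_vespoWeight [Fintype Ω] (hμ : ∀ τ, 0 < μ τ) (hπ : ∀ τ, 0 < π τ) (α lam : ℝ)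
    (c q : Ω → ℝ) :
    relEntropy q (vespoWeight μ π α lam c) =
      (1 - α) * relEntropy q μ + α * relEntropy q π + lam * ∑ τ, q τ * c τ := by
  simp only [relEntropy, mul_sum, ← sum_add_distrib]
  refine sum_congr rfl fun τ _ => ?_
  rcases eq_or_ne (q τ) 0 with hq | hq
  · simp [hq]
  · rw [Real.log_div hq (vespoWeight_pos (hμ τ) (hπ τ) α lam c).ne', Real.log_div hq (hμ τ).ne',
      Real.log_div hq (hπ τ).ne', log_vespoWeight (hμ τ) (hπ τ)]
    ring

end VespoWeight

theorem vespo_variational_solution_general {Ω : Type*} [Fintype Ω] [Nonempty Ω]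
    (μ π : Ω → ℝ) (hμpos : ∀ τ, 0 < μ τ) (hπpos : ∀ τ, 0 < π τ)
    (α lam : ℝ) (c : Ω → ℝ)
    (F : (Ω → ℝ) → ℝ)
    (hF : ∀ Q : Ω → ℝ, F Q =
      (1 - α) * ∑ τ, Q τ * Real.log (Q τ / μ τ)
      + α * ∑ τ, Q τ * Real.log (Q τ / π τ)
      + lam * ∑ τ, Q τ * c τ)
    (Z : ℝ) (hZ : Z = ∑ τ, μ τ ^ (1 - α) * π τ ^ α * Real.exp (-lam * c τ))
    (Qstar : Ω → ℝ)
    (hQstar : ∀ τ, Qstar τ = μ τ ^ (1 - α) * π τ ^ α * Real.exp (-lam * c τ) / Z) :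
    0 < Z ∧ (∀ τ, 0 ≤ Qstar τ) ∧ (∑ τ, Qstar τ = 1) ∧
      ∀ Q : Ω → ℝ, (∀ τ, 0 ≤ Q τ) → (∑ τ, Q τ = 1) →
        F Qstar ≤ F Q ∧ (F Q = F Qstar ↔ Q = Qstar) := by
  have hw (τ : Ω) : 0 < vespoWeight μ π α lam c τ :=
    vespoWeight_pos (hμpos τ) (hπpos τ) α lam c
  have hF_eq (Q : Ω → ℝ) : F Q = relEntropy Q (vespoWeight μ π α lam c) :=
    (hF Q).trans (relEntropy_vespoWeight hμpos hπpos α lam c Q).symm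
  obtain rfl : Qstar = normalizedWeight (vespoWeight μ π α lam c) :=
    funext fun τ => by rw [hQstar, hZ]; rfl
  have hmem := normalizedWeight_mem_stdSimplex hw
  refine ⟨hZ ▸ sum_pos (fun τ _ => hw τ) univ_nonempty, hmem.1, hmem.2, fun Q hQ0 hQ1 => ?_⟩
  rw [hF_eq, hF_eq]
  exact ⟨relEntropy_normalizedWeight_le hw ⟨hQ0, hQ1⟩,
    relEntropy_eq_relEntropy_normalizedWeight_iff hw ⟨hQ0, hQ1⟩⟩

/-- The constrained variational problem: the VESPO proposal `Q*` with density
proportional to `μ^(1-α) · π^α · exp(-λ W)` is the unique minimizer of the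
penalized mixed-KL objective `F` over probability mass functions on `Ω`. -/
theorem vespo_variational_solution {Ω : Type*} [Fintype Ω] [Nonempty Ω]
    (μ π : Ω → ℝ) (hμpos : ∀ τ, 0 < μ τ) (hπpos : ∀ τ, 0 < π τ)
    (hμ1 : ∑ τ, μ τ = 1) (hπ1 : ∑ τ, π τ = 1)
    (α lam : ℝ) (hα0 : 0 ≤ α) (hα1 : α ≤ 1) (hlam : 0 ≤ lam)
    (W : Ω → ℝ) (hW : ∀ τ, W τ = π τ / μ τ)
    (F : (Ω → ℝ) → ℝ)
    (hF : ∀ Q : Ω → ℝ, F Q =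
      (1 - α) * ∑ τ, Q τ * Real.log (Q τ / μ τ)
      + α * ∑ τ, Q τ * Real.log (Q τ / π τ)
      + lam * ∑ τ, Q τ * W τ)
    (Z : ℝ) (hZ : Z = ∑ τ, μ τ ^ (1 - α) * π τ ^ α * Real.exp (-lam * W τ))
    (Qstar : Ω → ℝ)
    (hQstar : ∀ τ, Qstar τ = μ τ ^ (1 - α) * π τ ^ α * Real.exp (-lam * W τ) / Z) :
    0 < Z ∧ (∀ τ, 0 ≤ Qstar τ) ∧ (∑ τ, Qstar τ = 1) ∧
      ∀ Q : Ω → ℝ, (∀ τ, 0 ≤ Q τ) → (∑ τ, Q τ = 1) →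
        F Qstar ≤ F Q ∧ (F Q = F Qstar ↔ Q = Qstar) :=
  vespo_variational_solution_general μ π hμpos hπpos α lam W F hF Z hZ Qstar hQstar
end

section
/- Let Ω be a finite type, let μ be a probability mass function on Ω with μ(τ) > 0 for all τ, let A : Ω → ℝ, and for θ ∈ ℝ let π_θ : Ω → (0,∞) be such that θ ↦ π_θ(τ) is differentiable for each τ. Set W_θ(τ) = π_θ(τ)/μ(τ). Let f : (0,∞) → ℝ be differentiable with f'(w) = φ(w)/w for a function φ : (0,∞) → ℝ. Then for every θ, the derivative in θ of ∑_τ μ(τ)·f(W_θ(τ))·A(τ) equals ∑_τ μ(τ)·φ(W_θ(τ))·A(τ)·(d/dθ) log π_θ(τ). -/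
/-!
In the coordinate `t = log w` the condition `f' (w) = φ(w)/w` reads `df/dt = φ`, so the chain rule
gives `d f(W_θ) = φ(W_θ) · d log W_θ`. As `log W_θ = log π_θ - log μ` and `μ` does not depend on
`θ`, the last factor is the score `d log π_θ`.
-/

section LogDerivative

variable {E : Type*} [NormedAddCommGroup E] [NormedSpace ℝ E] {u : E → ℝ} {x : E}

theorem hasFDerivAt_comp_of_hasDerivAt_div {g : ℝ → ℝ} {c : ℝ} (hg : HasDerivAt g (c / u x) (u x))
    (hu : DifferentiableAt ℝ u x) (hx : u x ≠ 0) :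
    HasFDerivAt (fun y => g (u y)) (c • fderiv ℝ (fun y => Real.log (u y)) x) x := by
  rw [fderiv.log hu hx, smul_smul, ← div_eq_mul_inv]
  exact hg.comp_hasFDerivAt x hu.hasFDerivAt

theorem fderiv_log_div_const (hu : ContinuousAt u x) (hx : u x ≠ 0) {c : ℝ} (hc : c ≠ 0) :
    fderiv ℝ (fun y => Real.log (u y / c)) x = fderiv ℝ (fun y => Real.log (u y)) x := by
  have log_div : (fun y => Real.log (u y / c)) =ᶠ[nhds x] fun y => Real.log (u y) - Real.log c :=
    (hu.eventually_ne hx).mono fun _ hy => Real.log_div hy hc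
  rw [log_div.fderiv_eq, fderiv_sub_const]

end LogDerivative

theorem reshaped_gradient_is_surrogate_gradient_general {Ω E : Type*} [Fintype Ω]
    [NormedAddCommGroup E] [NormedSpace ℝ E]
    (μ : Ω → ℝ) (hμpos : ∀ τ, 0 < μ τ) (A : Ω → ℝ)
    (P : E → Ω → ℝ) (θ : E) (hPpos : ∀ τ, 0 < P θ τ)
    (hPdiff : ∀ τ, DifferentiableAt ℝ (fun θ => P θ τ) θ)
    (W : E → Ω → ℝ) (hW : ∀ θ τ, W θ τ = P θ τ / μ τ)
    (f φ : ℝ → ℝ) (hf : ∀ w : ℝ, 0 < w → HasDerivAt f (φ w / w) w) :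
    HasFDerivAt (fun θ => ∑ τ, μ τ * f (W θ τ) * A τ)
      (∑ τ, (μ τ * φ (W θ τ) * A τ) • fderiv ℝ (fun θ => Real.log (P θ τ)) θ) θ := by
  refine HasFDerivAt.fun_sum fun τ _ => ?_
  have W_pos : 0 < W θ τ := hW θ τ ▸ div_pos (hPpos τ) (hμpos τ)
  have W_diff : DifferentiableAt ℝ (fun θ => W θ τ) θ := by
    simpa only [hW, div_eq_mul_inv] using (hPdiff τ).mul_const (μ τ)⁻¹
  have score_eq : fderiv ℝ (fun θ => Real.log (W θ τ)) θ =
      fderiv ℝ (fun θ => Real.log (P θ τ)) θ := by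
    simpa only [hW] using
      fderiv_log_div_const (hPdiff τ).continuousAt (hPpos τ).ne' (hμpos τ).ne'
  have f_W : HasFDerivAt (fun θ => f (W θ τ))
      (φ (W θ τ) • fderiv ℝ (fun θ => Real.log (P θ τ)) θ) θ :=
    score_eq ▸ hasFDerivAt_comp_of_hasDerivAt_div (hf _ W_pos) W_diff W_pos.ne'
  refine ((f_W.const_mul (μ τ)).mul_const (A τ)).congr_fderiv ?_
  module

/-- Surrogate-objective interpretation: if `f' (w) = φ(w)/w`, then the derivative
in `θ` of the surrogate `∑ τ, μ(τ)·f(W_θ(τ))·A(τ)` is exactly the reshaped policy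
gradient `∑ τ, μ(τ)·φ(W_θ(τ))·A(τ)·(d/dθ) log π_θ(τ)`. -/
theorem reshaped_gradient_is_surrogate_gradient {Ω : Type*} [Fintype Ω]
    (μ : Ω → ℝ) (hμpos : ∀ τ, 0 < μ τ) (hμ1 : ∑ τ, μ τ = 1)
    (A : Ω → ℝ)
    (P : ℝ → Ω → ℝ) (hPpos : ∀ θ τ, 0 < P θ τ)
    (hPdiff : ∀ τ, Differentiable ℝ (fun θ => P θ τ))
    (W : ℝ → Ω → ℝ) (hW : ∀ θ τ, W θ τ = P θ τ / μ τ)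
    (f φ : ℝ → ℝ)
    (hf : ∀ w : ℝ, 0 < w → HasDerivAt f (φ w / w) w) :
    ∀ θ : ℝ, HasDerivAt (fun θ : ℝ => ∑ τ, μ τ * f (W θ τ) * A τ)
      (∑ τ, μ τ * φ (W θ τ) * A τ * deriv (fun θ : ℝ => Real.log (P θ τ)) θ) θ := by
  intro θ
  simpa using (reshaped_gradient_is_surrogate_gradient_general
    μ hμpos A P θ (hPpos θ) (hPdiff · θ) W hW f φ hf).hasDerivAt
end

section
/- Let T be a natural number, ε ≥ 0, and x_1, …, x_T real numbers with |x_s| ≤ ε for every s. Then |∏_{s=1}^{T}(1 + x_s) − 1 − ∑_{s=1}^{T} x_s| ≤ (1+ε)^T − 1 − T·ε. -/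
/-!
Expanding `∏ (1 + x i)` over subsets of the index set, the terms beyond `1 + ∑ x i` are the
products over subsets with at least two elements. Each is bounded in norm by the same product of
the bounds `ε i`, and these products sum to the remainder of `∏ (1 + ε i)`.
-/

section FirstOrderRemainder

open Finset

variable {ι R : Type*}

theorem sum_powerset_card_le_one {M : Type*} [AddCommMonoid M] (s : Finset ι)
    (g : Finset ι → M) :
    ∑ t ∈ s.powerset with #t ≤ 1, g t = g ∅ + ∑ i ∈ s, g {i} := by
  classical
  have subsets_eq : {t ∈ s.powerset | #t ≤ 1} = insert ∅ (s.powersetCard 1) := by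
    ext t
    simp only [mem_filter, mem_powerset, mem_insert, mem_powersetCard,
      Nat.le_one_iff_eq_zero_or_eq_one, card_eq_zero]
    grind
  rw [subsets_eq, sum_insert (by simp), powersetCard_one, sum_map]
  rfl

theorem prod_one_add_sub_one_sub_sum [CommRing R] (s : Finset ι) (x : ι → R) :
    ∏ i ∈ s, (1 + x i) - 1 - ∑ i ∈ s, x i = ∑ t ∈ s.powerset with 1 < #t, ∏ i ∈ t, x i := by
  rw [prod_one_add, ← sum_filter_add_sum_filter_not s.powerset (fun t ↦ 1 < #t)]
  simp only [not_lt, sum_powerset_card_le_one, prod_empty, prod_singleton]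
  ring

theorem product_first_order_error_general [NormedCommRing R] (s : Finset ι) (x : ι → R)
    (ε : ι → ℝ) (hx : ∀ i ∈ s, ‖x i‖ ≤ ε i) :
    ‖∏ i ∈ s, (1 + x i) - 1 - ∑ i ∈ s, x i‖ ≤ ∏ i ∈ s, (1 + ε i) - 1 - ∑ i ∈ s, ε i := by
  rw [prod_one_add_sub_one_sub_sum, prod_one_add_sub_one_sub_sum]
  refine norm_sum_le_of_le _ fun t ht ↦ ?_
  obtain ⟨hts, ht_card⟩ : t ⊆ s ∧ 1 < #t := by simpa only [mem_filter, mem_powerset] using ht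
  have ht_nonempty : t.Nonempty := card_pos.mp (zero_lt_one.trans ht_card)
  calc ‖∏ i ∈ t, x i‖
    _ ≤ ∏ i ∈ t, ‖x i‖ := t.norm_prod_le' ht_nonempty x
    _ ≤ ∏ i ∈ t, ε i := prod_le_prod (fun _ _ ↦ norm_nonneg _) fun i hi ↦ hx i (hts hi)

end FirstOrderRemainder

/-- First-order Taylor error for the sequence-level importance weight: if each
`|x_s| ≤ ε`, then the product `∏ (1 + x_s)` deviates from its first-order
expansion `1 + ∑ x_s` by at most `(1+ε)^T - 1 - T·ε`. -/
theorem product_first_order_error (T : ℕ) (ε : ℝ) (hε : 0 ≤ ε)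
    (x : Fin T → ℝ) (hx : ∀ s, |x s| ≤ ε) :
    |(∏ s, (1 + x s)) - 1 - ∑ s, x s| ≤ (1 + ε) ^ T - 1 - T * ε := by
  simpa using product_first_order_error_general Finset.univ x (fun _ ↦ ε) fun s _ ↦ hx s
end
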